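/- Action of the purified permutation-function oracle on pf-relation states. Let N ≥ 1 and 0 ≤ t < N. Let pfo be the unitary on ℓ²([N] × S_N × {0,1}^{[N]}) determined on the standard basis by pfo(δ_{(x,π,f)}) = (−1)^{f(x)} · δ_{(π(x),π,f)}. For a tuple p = ((x_1,y_1),…,(x_t,y_t)) ∈ ([N]×[N])^t define pf_p ∈ ℓ²(S_N × {0,1}^{[N]}) by pf_p(π,f) := (1/√((N−t)!)) · 𝟙[π(x_i)=y_i for all i ∈ [t]] · (1/√(2^N)) · (−1)^{f(x_1)+⋯+f(x_t)}. Then for every x ∈ [N]: pfo(δ_x ⊗ pf_p) = (1/√(N−t)) · Σ_{y∈[N]} δ_y ⊗ pf_{p⌢(x,y)}, where p⌢(x,y) is the tuple p with the pair (x,y) appended (so the right-hand pf-states carry the normalization 1/√((N−t−1)!)). -/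

import Mathlib

/-!
Evaluating the oracle at a point gives
`(T v)(y, π, f) = (-1)^{f(π⁻¹ y)} · v(π⁻¹ y, π, f)` (`oracle_apply`), because `(π⁻¹ y, π, f)` labels
the only basis vector sent to a multiple of `δ_{(y, π, f)}`. For `v = δ_x ⊗ pf_p` the factor
`δ_x(π⁻¹ y)` is the new constraint `π x = y`, the sign is the new summand `f(x)` in the exponent, and
`(N - t)! = (N - t) · (N - t - 1)!` accounts for the normalization.
-/

open Finset

/-- The pf-relation vector `pf_p ∈ ℓ²(S_N × {0,1}^{[N]})` of a tuple
`p = ((x_1,y_1),…,(x_t,y_t))`: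
`pf_p(π,f) = (1/√((N−t)!)) · 𝟙[π x_i = y_i ∀i] · (1/√(2^N)) · (−1)^{f(x_1)+⋯+f(x_t)}`. -/
noncomputable def pfVec (N t : ℕ) (p : Fin t → Fin N × Fin N) :
    Equiv.Perm (Fin N) × (Fin N → Fin 2) → ℂ :=
  fun q =>
    (Real.sqrt ((N - t).factorial) : ℂ)⁻¹ *
      (if ∀ i, q.1 (p i).1 = (p i).2 then 1 else 0) *
      (Real.sqrt (2 ^ N) : ℂ)⁻¹ *
      (-1 : ℂ) ^ (∑ i, ((q.2 (p i).1 : ℕ)))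

/-- The standard basis vector `δ_a` of `ℓ²(X)`. -/
def deltaVec {X : Type*} [DecidableEq X] (a : X) : X → ℂ :=
  fun b => if b = a then 1 else 0

/-- The oracle, evaluated pointwise on an arbitrary vector. -/
theorem oracle_apply {N : ℕ}
    (T : ((Fin N × Equiv.Perm (Fin N) × (Fin N → Fin 2)) → ℂ) →ₗ[ℂ]
          ((Fin N × Equiv.Perm (Fin N) × (Fin N → Fin 2)) → ℂ))
    (hT : ∀ (x' : Fin N) (π : Equiv.Perm (Fin N)) (f : Fin N → Fin 2),
      T (deltaVec (x', π, f)) = ((-1 : ℂ) ^ ((f x' : ℕ))) • deltaVec (π x', π, f))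
    (v : (Fin N × Equiv.Perm (Fin N) × (Fin N → Fin 2)) → ℂ)
    (y : Fin N) (π : Equiv.Perm (Fin N)) (f : Fin N → Fin 2) :
    T v (y, π, f) = (-1 : ℂ) ^ ((f (π.symm y) : ℕ)) * v (π.symm y, π, f) := by
  have hv : v = ∑ a, v a • deltaVec a := by
    funext b
    simp [deltaVec, Finset.sum_apply]
  conv_lhs => rw [hv]
  rw [map_sum, Finset.sum_apply, Finset.sum_eq_single (π.symm y, π, f)]
  · rw [map_smul, hT]
    simp [deltaVec, mul_comm]
  · rintro ⟨x', π', f'⟩ - hne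
    have hne' : (y, π, f) ≠ (π' x', π', f') := by
      intro h
      simp only [Prod.mk.injEq] at h
      obtain ⟨rfl, rfl, rfl⟩ := h
      simp at hne
    rw [map_smul, hT]
    simp only [Pi.smul_apply, deltaVec, if_neg hne', smul_zero]
  · simp

/-- The recursion `(N - t)! = (N - t) · (N - t - 1)!` for the normalization constants. -/
theorem normalization_succ {N t : ℕ} (ht : t < N) :
    (Real.sqrt ((N - t).factorial) : ℂ)⁻¹ =
      (Real.sqrt (N - t) : ℂ)⁻¹ * (Real.sqrt ((N - (t + 1)).factorial) : ℂ)⁻¹ := by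
  have h : N - t = (N - (t + 1)) + 1 := by omega
  have hc : ((N - t : ℕ) : ℝ) = (N : ℝ) - t := Nat.cast_sub ht.le
  have hf : (((N - t).factorial : ℕ) : ℝ) = ((N : ℝ) - t) * ((N - (t + 1)).factorial : ℕ) := by
    rw [← hc, h, Nat.factorial_succ]
    push_cast
    ring
  have hnn : (0 : ℝ) ≤ (N : ℝ) - t := hc ▸ Nat.cast_nonneg _
  rw [hf, Real.sqrt_mul hnn, Complex.ofReal_mul, mul_inv]

/-- **Action of the purified permutation-function oracle on pf-relation states.**
If `T` is the linear map determined on the standard basis of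
`ℓ²([N] × S_N × {0,1}^{[N]})` by `T δ_{(x,π,f)} = (−1)^{f(x)} δ_{(π(x),π,f)}`,
then for `0 ≤ t < N`, every tuple `p` of length `t` and every `x ∈ [N]`,
`T (δ_x ⊗ pf_p) = (1/√(N−t)) Σ_y δ_y ⊗ pf_{p⌢(x,y)}`. -/
theorem pfo_action_on_pf_states (N t : ℕ) (hN : 1 ≤ N) (ht : t < N)
    (p : Fin t → Fin N × Fin N) (x : Fin N)
    (T : ((Fin N × Equiv.Perm (Fin N) × (Fin N → Fin 2)) → ℂ) →ₗ[ℂ]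
          ((Fin N × Equiv.Perm (Fin N) × (Fin N → Fin 2)) → ℂ))
    (hT : ∀ (x' : Fin N) (π : Equiv.Perm (Fin N)) (f : Fin N → Fin 2),
      T (deltaVec (x', π, f)) = ((-1 : ℂ) ^ ((f x' : ℕ))) • deltaVec (π x', π, f)) :
    T (fun q => deltaVec x q.1 * pfVec N t p q.2) =
      fun q => (Real.sqrt (N - t) : ℂ)⁻¹ * pfVec N (t + 1) (Fin.snoc p (x, q.1)) q.2 := by
  funext ⟨y, π, f⟩
  rw [oracle_apply T hT]
  simp only [pfVec, deltaVec]
  rw [normalization_succ ht, Fin.sum_univ_castSucc]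
  simp only [Fin.forall_fin_succ', Fin.snoc_castSucc, Fin.snoc_last]
  by_cases hx : π x = y
  · have hx' : π.symm y = x := by rw [← hx, π.symm_apply_apply]
    simp only [hx, hx', and_true, if_true, pow_add]
    ring
  · have hx' : π.symm y ≠ x := fun h => hx (by rw [← h, π.apply_symm_apply])
    simp [hx, hx']
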